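/- Let G be a finite simple connected graph, m ≥ 2 an integer, q ∈ V(G), and {w1, w2} an edge of G. Let p = q^{1/m}, and let v be the vertex of G^{1/m} on the thread replacing {w1, w2} at distance x from w1^{1/m}, where 0 < x < m/2. If dist_{G^{1/m}}(p, v) mod m > m/2, then dist_G(q, w1) = dist_G(q, w2) + 1 and ⌊dist_{G^{1/m}}(p, v) / m⌋ + 1 = dist_G(q, w1). -/

import Mathlib

open SimpleGraph

/-- The vertex type of the `m`-subdivision of a simple graph `G`:
branch vertices (`Sum.inl`) together with, for each edge (oriented from its
smaller to its larger endpoint) and each `i : Fin (m-1)`, the internal vertex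
of the corresponding thread at distance `i+1` from the smaller endpoint. -/
abbrev SubVert (V : Type*) [LinearOrder V] (G : SimpleGraph V) (m : ℕ) : Type _ :=
  V ⊕ ({e : V × V // G.Adj e.1 e.2 ∧ e.1 < e.2} × Fin (m - 1))

/-- Basic adjacency generating relation for the `m`-subdivision. -/
def subPre {V : Type*} [LinearOrder V] (G : SimpleGraph V) (m : ℕ) :
    SubVert V G m → SubVert V G m → Prop
  | Sum.inl u, Sum.inl v => m = 1 ∧ G.Adj u v
  | Sum.inl u, Sum.inr ei => (u = ei.1.1.1 ∧ (ei.2 : ℕ) = 0) ∨ (u = ei.1.1.2 ∧ (ei.2 : ℕ) + 2 = m)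
  | Sum.inr ei, Sum.inr ej => ei.1 = ej.1 ∧ (ei.2 : ℕ) + 1 = (ej.2 : ℕ)
  | Sum.inr _, Sum.inl _ => False

/-- The `m`-subdivision `G^{1/m}` of `G`: every edge of `G` is replaced by a
path (thread) of length `m`. -/
def Subdiv {V : Type*} [LinearOrder V] (G : SimpleGraph V) (m : ℕ) :
    SimpleGraph (SubVert V G m) :=
  SimpleGraph.fromRel (subPre G m)

/-- The vertex of `G^{1/m}` lying on the thread replacing the edge `{w₁, w₂}`
at distance `x` along the thread from `w₁` (for `0 ≤ x ≤ m`). -/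
def threadVert {V : Type*} [LinearOrder V] (G : SimpleGraph V) (m : ℕ) (w₁ w₂ : V)
    (h : G.Adj w₁ w₂) (x : ℕ) : SubVert V G m :=
  if hx0 : x = 0 then Sum.inl w₁
  else if hxm : m ≤ x then Sum.inl w₂
  else if hlt : w₁ < w₂ then
    Sum.inr (⟨(w₁, w₂), h, hlt⟩, ⟨x - 1, by omega⟩)
  else
    Sum.inr (⟨(w₂, w₁), h.symm, lt_of_le_of_ne (not_lt.mp hlt) h.ne'⟩, ⟨m - x - 1, by omega⟩)

/-- A vertex of `G^{1/m}` lies on the thread replacing the edge `{w₁, w₂}`. -/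
def OnThread {V : Type*} [LinearOrder V] (G : SimpleGraph V) (m : ℕ) (w₁ w₂ : V)
    (h : G.Adj w₁ w₂) (v : SubVert V G m) : Prop :=
  ∃ x ≤ m, v = threadVert G m w₁ w₂ h x

/-!
For `0 < m` and `q` reachable from `u`, the vertex at distance `x ≤ m` from `u` on the thread of an
edge `uv` is at distance `min (m * d(q, u) + x) (m * d(q, v) + (m - x))` from the branch vertex `q`.
The upper bound is realised by walks entering the thread through either end. For the lower bound,
the right-hand side is a function on the vertices of the subdivision which vanishes at `q` and
changes by at most `1` along each edge.

When `2 * x < m`, the first term of the minimum has residue `x < m / 2` modulo `m`. A residue above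
`m / 2` therefore forces the second term to be the strictly smaller one, so `d(q, v) < d(q, u)`.
-/

section Lipschitz

variable {V : Type*} {G : SimpleGraph V} {f : V → ℕ} {u v : V}

theorem apply_le_apply_add_walk_length (hf : ∀ ⦃a b⦄, G.Adj a b → f b ≤ f a + 1) (p : G.Walk u v) :
    f v ≤ f u + p.length := by
  induction p with
  | nil => simp
  | cons h p ih =>
    rw [Walk.length_cons]
    linarith [hf h]

theorem apply_le_apply_add_dist (hf : ∀ ⦃a b⦄, G.Adj a b → f b ≤ f a + 1) (h : G.Reachable u v) :
    f v ≤ f u + G.dist u v := by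
  obtain ⟨p, hp⟩ := h.exists_walk_length_eq_dist
  exact hp ▸ apply_le_apply_add_walk_length hf p

theorem dist_le_dist_add_one_of_adj (q : V) (h : G.Adj u v) : G.dist q u ≤ G.dist q v + 1 := by
  have := h.diff_dist_adj (u := q)
  omega

theorem mul_dist_le_mul_dist_add_of_adj (m : ℕ) (q : V) (h : G.Adj u v) :
    m * G.dist q u ≤ m * G.dist q v + m :=
  Nat.mul_le_mul_left m (dist_le_dist_add_one_of_adj q h)

end Lipschitz

section Subdivision

variable {V : Type*} [LinearOrder V] {G : SimpleGraph V} {m x : ℕ} {q u v : V}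

@[simp]
theorem threadVert_zero (h : G.Adj u v) : threadVert G m u v h 0 = Sum.inl u := by
  simp [threadVert]

@[simp]
theorem threadVert_self (hm : 0 < m) (h : G.Adj u v) : threadVert G m u v h m = Sum.inl v := by
  simp [threadVert, hm.ne']

theorem threadVert_of_lt (huv : u < v) (h : G.Adj u v) (hx : x < m - 1) :
    threadVert G m u v h (x + 1) = Sum.inr (⟨(u, v), h, huv⟩, ⟨x, hx⟩) := by
  have : ¬m ≤ x + 1 := by omega
  simp [threadVert, this, huv]

theorem threadVert_symm (hm : 0 < m) (h : G.Adj u v) (hx : x ≤ m) :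
    threadVert G m v u h.symm (m - x) = threadVert G m u v h x := by
  have := h.ne.lt_or_gt
  grind [threadVert]

theorem ne_of_subPre {a b : SubVert V G m} (h : subPre G m a b) : a ≠ b := by
  rintro rfl
  match a, h with
  | .inl _, h => exact h.2.ne rfl
  | .inr (_, i), h => exact i.val.succ_ne_self h.2

namespace Subdiv

theorem adj_of_subPre {a b : SubVert V G m} (h : subPre G m a b) : (Subdiv G m).Adj a b :=
  (fromRel_adj ..).2 ⟨ne_of_subPre h, .inl h⟩

theorem adj_threadVert_succ (h : G.Adj u v) (hx : x < m) :
    (Subdiv G m).Adj (threadVert G m u v h x) (threadVert G m u v h (x + 1)) := by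
  wlog huv : u < v generalizing u v x
  · have hvu := h.ne.lt_or_gt.resolve_left huv
    have hm : 0 < m := by omega
    rw [← threadVert_symm hm h hx.le, ← threadVert_symm hm h hx]
    convert (this h.symm (x := m - (x + 1)) (by omega) hvu).symm using 2
    omega
  obtain _ | x := x
  · obtain rfl | hm : m = 1 ∨ 1 < m := by omega
    · simpa using adj_of_subPre (m := 1) (a := .inl u) (b := .inl v) ⟨rfl, h⟩
    · rw [threadVert_zero, threadVert_of_lt huv h (by omega)]
      exact adj_of_subPre (Or.inl ⟨rfl, rfl⟩)
  · rw [threadVert_of_lt huv h (by omega)]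
    obtain rfl | hm : x + 2 = m ∨ x + 2 < m := by omega
    · rw [threadVert_self (by omega)]
      apply Adj.symm
      exact adj_of_subPre (Or.inr ⟨rfl, rfl⟩)
    · rw [threadVert_of_lt huv h (by omega)]
      exact adj_of_subPre ⟨rfl, rfl⟩

theorem exists_walk_threadVert_length_eq (h : G.Adj u v) (hx : x ≤ m) :
    ∃ p : (Subdiv G m).Walk (Sum.inl u) (threadVert G m u v h x), p.length = x := by
  induction x with
  | zero => exact ⟨Walk.nil.copy rfl (threadVert_zero h).symm, by simp⟩
  | succ x ih =>
    obtain ⟨p, hp⟩ := ih (by omega)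
    exact ⟨p.concat (adj_threadVert_succ h hx), by simp [hp]⟩

theorem exists_walk_inl_length_eq (hm : 0 < m) (p : G.Walk u v) :
    ∃ p' : (Subdiv G m).Walk (Sum.inl u) (Sum.inl v), p'.length = m * p.length := by
  induction p with
  | nil => exact ⟨Walk.nil, by simp⟩
  | cons h p ih =>
    obtain ⟨r, hr⟩ := ih
    obtain ⟨s, hs⟩ := exists_walk_threadVert_length_eq h (le_refl m)
    refine ⟨(s.copy rfl (threadVert_self hm h)).append r, ?_⟩
    simp only [Walk.length_append, Walk.length_copy, Walk.length_cons, hr, hs]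
    ring

theorem exists_walk_inl_threadVert_length_eq (hm : 0 < m) (hq : G.Reachable q u) (h : G.Adj u v)
    (hx : x ≤ m) :
    ∃ p : (Subdiv G m).Walk (Sum.inl q) (threadVert G m u v h x),
      p.length = m * G.dist q u + x := by
  obtain ⟨r, hr⟩ := hq.exists_walk_length_eq_dist
  obtain ⟨s, hs⟩ := exists_walk_inl_length_eq hm r
  obtain ⟨t, ht⟩ := exists_walk_threadVert_length_eq h hx
  exact ⟨s.append t, by rw [Walk.length_append, hs, ht, hr]⟩

/-- The distance from the branch vertex `q` in the subdivision, in closed form: an internal vertex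
of a thread is reached through the nearer of the two ends. It is used to bound distances from
below. -/
noncomputable def potential (G : SimpleGraph V) (m : ℕ) (q : V) : SubVert V G m → ℕ
  | Sum.inl u => m * G.dist q u
  | Sum.inr (e, i) =>
    min (m * G.dist q e.1.1 + (i + 1)) (m * G.dist q e.1.2 + (m - (i + 1)))

theorem potential_threadVert (q : V) (h : G.Adj u v) (hx : x ≤ m) :
    potential G m q (threadVert G m u v h x) =
      min (m * G.dist q u + x) (m * G.dist q v + (m - x)) := by
  have huv := mul_dist_le_mul_dist_add_of_adj m q h
  have hvu := mul_dist_le_mul_dist_add_of_adj m q h.symm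
  unfold threadVert
  split_ifs <;> simp only [potential] <;> omega

theorem potential_le_add_one_of_subPre {a b : SubVert V G m} (q : V) (h : subPre G m a b) :
    potential G m q a ≤ potential G m q b + 1 ∧ potential G m q b ≤ potential G m q a + 1 := by
  match a, b, h with
  | .inl u, .inl v, ⟨hm, h⟩ =>
    have huv := mul_dist_le_mul_dist_add_of_adj m q h
    have hvu := mul_dist_le_mul_dist_add_of_adj m q h.symm
    dsimp only [potential]
    omega
  | .inl _, .inr (e, i), hi =>
    have huv := mul_dist_le_mul_dist_add_of_adj m q e.2.1
    have hvu := mul_dist_le_mul_dist_add_of_adj m q e.2.1.symm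
    dsimp only [subPre, potential] at hi ⊢
    obtain ⟨rfl, hi⟩ | ⟨rfl, hi⟩ := hi <;> omega
  | .inr (e, i), .inr (_, j), ⟨rfl, hij⟩ =>
    dsimp only [potential] at hij ⊢
    omega

theorem potential_le_add_one_of_adj (q : V) {a b : SubVert V G m} (h : (Subdiv G m).Adj a b) :
    potential G m q b ≤ potential G m q a + 1 := by
  obtain ⟨-, h | h⟩ := h
  · exact (potential_le_add_one_of_subPre q h).2
  · exact (potential_le_add_one_of_subPre q h).1

theorem dist_threadVert (hm : 0 < m) (hq : G.Reachable q u) (h : G.Adj u v) (hx : x ≤ m) :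
    (Subdiv G m).dist (Sum.inl q) (threadVert G m u v h x) =
      min (m * G.dist q u + x) (m * G.dist q v + (m - x)) := by
  obtain ⟨p, hp⟩ := exists_walk_inl_threadVert_length_eq hm hq h hx
  have hsymm := exists_walk_inl_threadVert_length_eq hm (hq.trans h.reachable) h.symm
    (Nat.sub_le m x)
  rw [threadVert_symm hm h hx] at hsymm
  obtain ⟨p', hp'⟩ := hsymm
  apply le_antisymm
  · exact le_min (hp ▸ dist_le p) (hp' ▸ dist_le p')
  · have hle := apply_le_apply_add_dist (fun _ _ ↦ potential_le_add_one_of_adj q) p.reachable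
    have hzero : potential G m q (Sum.inl q) = 0 := by simp [potential]
    rwa [potential_threadVert q h hx, hzero, zero_add] at hle

end Subdiv

theorem subdiv_dist_div_of_mod_gt_general {w₁ w₂ : V} (hq : G.Reachable q w₁) (hw : G.Adj w₁ w₂)
    (hx0 : 0 < x) (hxm : 2 * x < m)
    (hmod : m < 2 * ((Subdiv G m).dist (Sum.inl q) (threadVert G m w₁ w₂ hw x) % m)) :
    G.dist q w₁ = G.dist q w₂ + 1 ∧
    (Subdiv G m).dist (Sum.inl q) (threadVert G m w₁ w₂ hw x) / m + 1 = G.dist q w₁ := by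
  have hdist := Subdiv.dist_threadVert (by omega) hq hw (by omega : x ≤ m)
  set D := (Subdiv G m).dist (Sum.inl q) (threadVert G m w₁ w₂ hw x)
  have hD₁ : D ≠ m * G.dist q w₁ + x := by
    intro hD
    rw [hD, Nat.mul_add_mod, Nat.mod_eq_of_lt (by omega)] at hmod
    omega
  have hD₂ : D = m * G.dist q w₂ + (m - x) := by omega
  have hlt : G.dist q w₂ < G.dist q w₁ := by
    have hmul : m * G.dist q w₂ < m * G.dist q w₁ := by omega
    exact Nat.lt_of_mul_lt_mul_left hmul
  have hle : G.dist q w₁ ≤ G.dist q w₂ + 1 := dist_le_dist_add_one_of_adj q hw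
  have hdiv : D / m = G.dist q w₂ := by
    rw [hD₂, Nat.mul_add_div (by omega), Nat.div_eq_of_lt (by omega), add_zero]
  omega

end Subdivision

/-- For `p = q^{1/m}` and `v` at distance `x` from `w₁` along the thread of the
edge `{w₁, w₂}` with `0 < x < m/2`: if `dist(p,v) mod m > m/2`, then
`dist_G(q,w₁) = dist_G(q,w₂) + 1` and `⌊dist(p,v) / m⌋ + 1 = dist_G(q, w₁)`. -/
theorem subdiv_dist_div_of_mod_gt {n m : ℕ} (G : SimpleGraph (Fin n))
    (hG : G.Connected) (hm : 2 ≤ m) (q w₁ w₂ : Fin n) (hw : G.Adj w₁ w₂)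
    (x : ℕ) (hx0 : 0 < x) (hxm : 2 * x < m)
    (hmod : m < 2 * ((Subdiv G m).dist (Sum.inl q) (threadVert G m w₁ w₂ hw x) % m)) :
    G.dist q w₁ = G.dist q w₂ + 1 ∧
    (Subdiv G m).dist (Sum.inl q) (threadVert G m w₁ w₂ hw x) / m + 1 = G.dist q w₁ :=
  subdiv_dist_div_of_mod_gt_general (hG q w₁) hw hx0 hxm hmod
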